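/- Let H₁, H₂ be separable Hilbert spaces, x an H₁-valued random variable with covariance operator L_C = E[x ⊗ x], whose orthonormal eigenvectors are φ_k with eigenvalues λ_k, and ε = ε₁ f₁ with ε₁ ~ N(0, σ²) independent of x, where f₁ is a fixed unit vector in H₂. For β ∈ H₁, let ρ_β be the law of (x, y) with y = ⟨β, x⟩ f₁ + ε. Then for β_i, β_j ∈ H₁, the Kullback–Leibler divergence satisfies D_{kl}(ρ_{β_i}^{⊗T} ‖ ρ_{β_j}^{⊗T}) = (T/(2σ²)) ‖L_C^{1/2}(β_i − β_j)‖². -/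

import Mathlib

open MeasureTheory ProbabilityTheory
open scoped RealInnerProductSpace NNReal

/-- The Kullback–Leibler divergence `∫ log (dρ₁/dρ₂) dρ₁` (meaningful when `ρ₁ ≪ ρ₂` and the
log-density is integrable). -/
noncomputable def klDivergence {α : Type} [MeasurableSpace α] (ρ₁ ρ₂ : Measure α) : ℝ :=
  ∫ z, Real.log ((ρ₁.rnDeriv ρ₂ z).toReal) ∂ρ₁

/-!
The log-likelihood ratio of two product measures is the sum of the coordinatewise ones, whence the
factor `T`, and pushing both laws forward along the closed embedding `t ↦ t • f₁` does not change
the divergence, so the output may be taken to be real. With real output `m x + ε`, disintegrating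
over `x` shows that the log-likelihood ratio of the regression functions `m₁` and `m₂` is, at the
output `m₁ x + ε`, equal to `(m₁ x - m₂ x) ^ 2 / (2 * σ ^ 2) + (m₁ x - m₂ x) * ε / σ ^ 2`. The
cross term has mean zero by independence, and `E[⟪x, f⟫ ^ 2] = ⟪L_C f, f⟫ = ‖R f‖ ^ 2`.
-/

open scoped ENNReal

section ProductMeasure

variable {ι : Type*} [Fintype ι] {α : ι → Type*} [∀ i, MeasurableSpace (α i)]

lemma lintegral_fintype_prod_eq_prod (μ : ∀ i, Measure (α i)) [∀ i, IsProbabilityMeasure (μ i)]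
    {f : ∀ i, α i → ℝ≥0∞} (hf : ∀ i, Measurable (f i)) :
    ∫⁻ z, ∏ i, f i (z i) ∂Measure.pi μ = ∏ i, ∫⁻ x, f i x ∂μ i := by
  rw [lintegral_prod_eq_prod_lintegral_of_indepFun Finset.univ _
    (iIndepFun_pi fun i ↦ (hf i).aemeasurable) fun i ↦ (hf i).comp (measurable_pi_apply i)]
  exact Finset.prod_congr rfl fun i _ ↦ (measurePreserving_eval μ i).lintegral_comp (hf i)

lemma pi_withDensity (μ : ∀ i, Measure (α i)) [∀ i, IsProbabilityMeasure (μ i)]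
    {f : ∀ i, α i → ℝ≥0∞} (hf : ∀ i, Measurable (f i))
    [∀ i, SigmaFinite ((μ i).withDensity (f i))] :
    Measure.pi (fun i ↦ (μ i).withDensity (f i)) =
      (Measure.pi μ).withDensity fun z ↦ ∏ i, f i (z i) := by
  refine Measure.pi_eq fun s hs ↦ ?_
  have indicator_prod (z : ∀ i, α i) :
      (Set.univ.pi s).indicator (fun z ↦ ∏ i, f i (z i)) z = ∏ i, (s i).indicator (f i) (z i) := by
    classical
    simp only [Set.indicator_apply, Set.mem_univ_pi, Finset.prod_ite_zero, Finset.mem_univ,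
      true_imp_iff]
  rw [withDensity_apply _ (.univ_pi hs), ← lintegral_indicator (.univ_pi hs)]
  simp only [indicator_prod]
  rw [lintegral_fintype_prod_eq_prod μ fun i ↦ (hf i).indicator (hs i)]
  exact Finset.prod_congr rfl fun i _ ↦ by
    rw [withDensity_apply _ (hs i), lintegral_indicator (hs i)]

variable {ρ η : ∀ i, Measure (α i)} [∀ i, IsProbabilityMeasure (ρ i)]
  [∀ i, IsProbabilityMeasure (η i)]

lemma pi_eq_withDensity_rnDeriv (hac : ∀ i, ρ i ≪ η i) :
    Measure.pi ρ = (Measure.pi η).withDensity fun z ↦ ∏ i, (ρ i).rnDeriv (η i) (z i) := by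
  rw [← pi_withDensity η fun i ↦ Measure.measurable_rnDeriv (ρ i) (η i)]
  simp only [Measure.withDensity_rnDeriv_eq _ _ (hac _)]

lemma llr_pi (hac : ∀ i, ρ i ≪ η i) :
    llr (Measure.pi ρ) (Measure.pi η) =ᵐ[Measure.pi ρ] fun z ↦ ∑ i, llr (ρ i) (η i) (z i) := by
  have density_pi :
      (Measure.pi ρ).rnDeriv (Measure.pi η) =ᵐ[Measure.pi η]
        fun z ↦ ∏ i, (ρ i).rnDeriv (η i) (z i) := by
    rw [pi_eq_withDensity_rnDeriv hac]
    exact Measure.rnDeriv_withDensity _ (by fun_prop)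
  have pi_ac : Measure.pi ρ ≪ Measure.pi η := by
    rw [pi_eq_withDensity_rnDeriv hac]
    exact withDensity_absolutelyContinuous _ _
  have density_ne_zero : ∀ᵐ z ∂Measure.pi ρ, ∀ i, ((ρ i).rnDeriv (η i) (z i)).toReal ≠ 0 :=
    Filter.eventually_all.2 fun i ↦ (Measure.quasiMeasurePreserving_eval ρ i).ae <| by
      filter_upwards [Measure.rnDeriv_pos (hac i), (hac i).ae_le ((ρ i).rnDeriv_lt_top (η i))]
        with x hpos hlt using (ENNReal.toReal_pos hpos.ne' hlt.ne).ne'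
  filter_upwards [pi_ac.ae_le density_pi, density_ne_zero] with z hz hz_ne
  rw [llr, hz, ENNReal.toReal_prod, Real.log_prod fun i _ ↦ hz_ne i]
  rfl

end ProductMeasure

lemma klDivergence_pi {ι : Type} [Fintype ι] {α : ι → Type} [∀ i, MeasurableSpace (α i)]
    {ρ η : ∀ i, Measure (α i)} [∀ i, IsProbabilityMeasure (ρ i)] [∀ i, IsProbabilityMeasure (η i)]
    (hac : ∀ i, ρ i ≪ η i) (hint : ∀ i, Integrable (llr (ρ i) (η i)) (ρ i)) :
    klDivergence (Measure.pi ρ) (Measure.pi η) = ∑ i, klDivergence (ρ i) (η i) := by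
  calc klDivergence (Measure.pi ρ) (Measure.pi η)
      = ∫ z, ∑ i, llr (ρ i) (η i) (z i) ∂Measure.pi ρ := integral_congr_ae (llr_pi hac)
    _ = ∑ i, ∫ z, llr (ρ i) (η i) (z i) ∂Measure.pi ρ :=
        integral_finsetSum _ fun i _ ↦ integrable_comp_eval (hint i)
    _ = ∑ i, klDivergence (ρ i) (η i) :=
        Finset.sum_congr rfl fun i _ ↦ integral_comp_eval (hint i).aestronglyMeasurable

lemma klDivergence_map_of_measurableEmbedding {α β : Type} [MeasurableSpace α]
    [MeasurableSpace β] {ρ η : Measure α} [SigmaFinite ρ] [SigmaFinite η] {f : α → β}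
    (hf : MeasurableEmbedding f) (hac : ρ ≪ η) :
    klDivergence (ρ.map f) (η.map f) = klDivergence ρ η := by
  rw [klDivergence, hf.integral_map]
  refine integral_congr_ae ?_
  filter_upwards [hac.ae_le (hf.rnDeriv_map ρ η)] with x hx
  rw [hx]

lemma llr_withDensity_exp {α : Type*} [MeasurableSpace α] (η : Measure α) [SigmaFinite η]
    {l : α → ℝ} (hl : Measurable l) :
    llr (η.withDensity fun x ↦ .ofReal (Real.exp (l x))) η =ᵐ[η] l := by
  filter_upwards [Measure.rnDeriv_withDensity η (f := fun x ↦ .ofReal (Real.exp (l x)))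
    (by fun_prop)] with x hx
  rw [llr, hx, ENNReal.toReal_ofReal (Real.exp_pos _).le, Real.log_exp]

section Gaussian

/-- The log-likelihood ratio at `t` of the Gaussian laws with means `a` and `b` and common
variance `v`. -/
noncomputable def gaussianLLR (v : ℝ≥0) (a b t : ℝ) : ℝ :=
  ((t - b) ^ 2 - (t - a) ^ 2) / (2 * v)

@[fun_prop]
lemma measurable_gaussianLLR {X : Type*} [MeasurableSpace X] {a b t : X → ℝ} (ha : Measurable a)
    (hb : Measurable b) (ht : Measurable t) (v : ℝ≥0) :
    Measurable fun x ↦ gaussianLLR v (a x) (b x) (t x) := by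
  unfold gaussianLLR
  fun_prop

lemma gaussianLLR_add (v : ℝ≥0) (a b e : ℝ) :
    gaussianLLR v a b (a + e) = (a - b) ^ 2 / (2 * v) + (a - b) * e / v := by
  rw [gaussianLLR]
  ring

lemma gaussianReal_eq_withDensity_exp_gaussianLLR {v : ℝ≥0} (hv : v ≠ 0) (a b : ℝ) :
    gaussianReal a v =
      (gaussianReal b v).withDensity fun t ↦ .ofReal (Real.exp (gaussianLLR v a b t)) := by
  rw [gaussianReal_of_var_ne_zero a hv, gaussianReal_of_var_ne_zero b hv,
    ← withDensity_mul _ (measurable_gaussianPDF b v) (by fun_prop)]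
  congr 1 with t
  rw [Pi.mul_apply, gaussianPDF, gaussianPDF, ← ENNReal.ofReal_mul (gaussianPDFReal_nonneg _ _ _),
    gaussianPDFReal, gaussianPDFReal, mul_assoc (√(2 * Real.pi * v))⁻¹,
    ← Real.exp_add, gaussianLLR]
  ring_nf

variable {X : Type*} [MeasurableSpace X] {ν : Measure X} {m m₁ m₂ : X → ℝ} {v : ℝ≥0}

/-- The law of `(x, m x + ε)`, where `x` has law `ν` and `ε ~ N(0, v)` is independent of `x`:
Gaussian regression with design law `ν`, regression function `m` and noise variance `v`. -/
noncomputable def gaussianRegressionLaw (ν : Measure X) (m : X → ℝ) (v : ℝ≥0) : Measure (X × ℝ) :=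
  (ν.prod (gaussianReal 0 v)).map fun p ↦ (p.1, m p.1 + p.2)

lemma isProbabilityMeasure_gaussianRegressionLaw [IsProbabilityMeasure ν] (hm : Measurable m) :
    IsProbabilityMeasure (gaussianRegressionLaw ν m v) :=
  Measure.isProbabilityMeasure_map (by fun_prop)

lemma lintegral_gaussianRegressionLaw (ν : Measure X) (hm : Measurable m) (v : ℝ≥0)
    {F : X × ℝ → ℝ≥0∞} (hF : Measurable F) :
    ∫⁻ p, F p ∂gaussianRegressionLaw ν m v = ∫⁻ x, ∫⁻ t, F (x, t) ∂gaussianReal (m x) v ∂ν := by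
  rw [gaussianRegressionLaw, lintegral_map hF (by fun_prop), lintegral_prod _ (by fun_prop)]
  refine lintegral_congr fun x ↦ ?_
  rw [← lintegral_map (f := fun t ↦ F (x, t)) (by fun_prop) (by fun_prop : Measurable (m x + ·)),
    gaussianReal_map_const_add, zero_add]

lemma gaussianRegressionLaw_eq_withDensity (ν : Measure X) (hm₁ : Measurable m₁)
    (hm₂ : Measurable m₂) (hv : v ≠ 0) :
    gaussianRegressionLaw ν m₁ v = (gaussianRegressionLaw ν m₂ v).withDensity fun p ↦
      .ofReal (Real.exp (gaussianLLR v (m₁ p.1) (m₂ p.1) p.2)) := by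
  refine Measure.ext_of_lintegral _ fun F hF ↦ ?_
  have measurable_density : Measurable fun p : X × ℝ ↦
      ENNReal.ofReal (Real.exp (gaussianLLR v (m₁ p.1) (m₂ p.1) p.2)) := by fun_prop
  rw [lintegral_withDensity_eq_lintegral_mul _ measurable_density hF,
    lintegral_gaussianRegressionLaw ν hm₁ v hF,
    lintegral_gaussianRegressionLaw ν hm₂ v (measurable_density.mul hF)]
  refine lintegral_congr fun x ↦ ?_
  rw [gaussianReal_eq_withDensity_exp_gaussianLLR hv (m₁ x) (m₂ x)]
  exact lintegral_withDensity_eq_lintegral_mul _ (by fun_prop) (by fun_prop)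

lemma gaussianRegressionLaw_absolutelyContinuous (ν : Measure X) (hm₁ : Measurable m₁)
    (hm₂ : Measurable m₂) (hv : v ≠ 0) :
    gaussianRegressionLaw ν m₁ v ≪ gaussianRegressionLaw ν m₂ v := by
  rw [gaussianRegressionLaw_eq_withDensity ν hm₁ hm₂ hv]
  exact withDensity_absolutelyContinuous _ _

lemma integrable_fst_mul_snd_gaussianReal {g : X → ℝ} (hg : Integrable g ν)
    (a : ℝ) (v : ℝ≥0) :
    Integrable (fun p : X × ℝ ↦ g p.1 * p.2) (ν.prod (gaussianReal a v)) :=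
  hg.mul_prod ((memLp_id_gaussianReal 1).integrable le_rfl)

lemma integral_fst_mul_snd_gaussianReal_zero (ν : Measure X) [SFinite ν] (g : X → ℝ) (v : ℝ≥0) :
    ∫ p, g p.1 * p.2 ∂ν.prod (gaussianReal 0 v) = 0 := by
  rw [integral_prod_mul g fun e ↦ e, integral_id_gaussianReal, mul_zero]

variable [IsFiniteMeasure ν]

lemma llr_gaussianRegressionLaw (hm₁ : Measurable m₁) (hm₂ : Measurable m₂) (hv : v ≠ 0) :
    llr (gaussianRegressionLaw ν m₁ v) (gaussianRegressionLaw ν m₂ v)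
      =ᵐ[gaussianRegressionLaw ν m₁ v] fun p ↦ gaussianLLR v (m₁ p.1) (m₂ p.1) p.2 := by
  have : IsFiniteMeasure (gaussianRegressionLaw ν m₂ v) := by
    unfold gaussianRegressionLaw
    infer_instance
  refine (gaussianRegressionLaw_absolutelyContinuous ν hm₁ hm₂ hv).ae_le ?_
  rw [gaussianRegressionLaw_eq_withDensity ν hm₁ hm₂ hv]
  exact llr_withDensity_exp _ (by fun_prop)

lemma integrable_gaussianLLR (hm₁ : Measurable m₁) (hm₂ : Measurable m₂)
    (hL2 : MemLp (fun x ↦ m₁ x - m₂ x) 2 ν) :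
    Integrable (fun p ↦ gaussianLLR v (m₁ p.1) (m₂ p.1) p.2) (gaussianRegressionLaw ν m₁ v) := by
  rw [gaussianRegressionLaw,
    integrable_map_measure (Measurable.aestronglyMeasurable (by fun_prop)) (by fun_prop)]
  simp only [Function.comp_def, gaussianLLR_add]
  exact ((hL2.integrable_sq.div_const _).comp_fst _).add
    ((integrable_fst_mul_snd_gaussianReal (hL2.integrable one_le_two) 0 v).div_const _)

lemma integral_gaussianLLR (hm₁ : Measurable m₁) (hm₂ : Measurable m₂)
    (hL2 : MemLp (fun x ↦ m₁ x - m₂ x) 2 ν) :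
    ∫ p, gaussianLLR v (m₁ p.1) (m₂ p.1) p.2 ∂gaussianRegressionLaw ν m₁ v =
      (∫ x, (m₁ x - m₂ x) ^ 2 ∂ν) / (2 * v) := by
  have integrable_cross := integrable_fst_mul_snd_gaussianReal (hL2.integrable one_le_two) 0 v
  calc ∫ p, gaussianLLR v (m₁ p.1) (m₂ p.1) p.2 ∂gaussianRegressionLaw ν m₁ v
      = ∫ p, ((m₁ p.1 - m₂ p.1) ^ 2 / (2 * v) + (m₁ p.1 - m₂ p.1) * p.2 / v)
          ∂ν.prod (gaussianReal 0 v) := by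
        rw [gaussianRegressionLaw,
          integral_map (by fun_prop) (Measurable.aestronglyMeasurable (by fun_prop))]
        simp only [gaussianLLR_add]
    _ = ∫ p, (m₁ p.1 - m₂ p.1) ^ 2 / (2 * v) ∂ν.prod (gaussianReal 0 v) +
          (∫ p, (m₁ p.1 - m₂ p.1) * p.2 ∂ν.prod (gaussianReal 0 v)) / v := by
        rw [integral_add ((hL2.integrable_sq.div_const _).comp_fst _)
          (integrable_cross.div_const _),
          integral_div _ fun p : X × ℝ ↦ (m₁ p.1 - m₂ p.1) * p.2]
    _ = (∫ x, (m₁ x - m₂ x) ^ 2 ∂ν) / (2 * v) := by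
        rw [integral_fst_mul_snd_gaussianReal_zero ν fun x ↦ m₁ x - m₂ x, zero_div, add_zero,
          integral_fun_fst fun x ↦ (m₁ x - m₂ x) ^ 2 / (2 * (v : ℝ)), probReal_univ, one_smul,
          integral_div]

lemma integrable_llr_gaussianRegressionLaw (hm₁ : Measurable m₁) (hm₂ : Measurable m₂)
    (hL2 : MemLp (fun x ↦ m₁ x - m₂ x) 2 ν) (hv : v ≠ 0) :
    Integrable (llr (gaussianRegressionLaw ν m₁ v) (gaussianRegressionLaw ν m₂ v))
      (gaussianRegressionLaw ν m₁ v) :=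
  (integrable_gaussianLLR hm₁ hm₂ hL2).congr (llr_gaussianRegressionLaw hm₁ hm₂ hv).symm

lemma klDivergence_gaussianRegressionLaw {X : Type} [MeasurableSpace X] {ν : Measure X}
    [IsFiniteMeasure ν] {m₁ m₂ : X → ℝ} (hm₁ : Measurable m₁) (hm₂ : Measurable m₂)
    (hL2 : MemLp (fun x ↦ m₁ x - m₂ x) 2 ν) (hv : v ≠ 0) :
    klDivergence (gaussianRegressionLaw ν m₁ v) (gaussianRegressionLaw ν m₂ v) =
      (∫ x, (m₁ x - m₂ x) ^ 2 ∂ν) / (2 * v) :=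
  (integral_congr_ae (llr_gaussianRegressionLaw hm₁ hm₂ hv)).trans
    (integral_gaussianLLR hm₁ hm₂ hL2)

end Gaussian

section LinearOutput

variable {X E : Type*} [MeasurableSpace X] [NormedAddCommGroup E] [NormedSpace ℝ E]
  [MeasurableSpace E] [BorelSpace E]

lemma measurableEmbedding_prodMap_id_smul {f : E} (hf : f ≠ 0) :
    MeasurableEmbedding (Prod.map id (· • f) : X × ℝ → X × E) :=
  MeasurableEmbedding.id.prodMap (isClosedEmbedding_smul_left hf).measurableEmbedding

lemma klDivergence_pi_map_gaussianRegressionLaw {X E ι : Type} [MeasurableSpace X]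
    [NormedAddCommGroup E] [NormedSpace ℝ E] [MeasurableSpace E] [BorelSpace E] [Fintype ι]
    {ν : Measure X} [IsProbabilityMeasure ν] {m₁ m₂ : X → ℝ} (hm₁ : Measurable m₁)
    (hm₂ : Measurable m₂) (hL2 : MemLp (fun x ↦ m₁ x - m₂ x) 2 ν) {v : ℝ≥0} (hv : v ≠ 0) {f : E}
    (hf : f ≠ 0) :
    klDivergence
        (Measure.pi fun _ : ι ↦ (gaussianRegressionLaw ν m₁ v).map (Prod.map id (· • f)))
        (Measure.pi fun _ : ι ↦ (gaussianRegressionLaw ν m₂ v).map (Prod.map id (· • f))) =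
      Fintype.card ι / (2 * v) * ∫ x, (m₁ x - m₂ x) ^ 2 ∂ν := by
  have embedding := measurableEmbedding_prodMap_id_smul (X := X) hf
  have hac := gaussianRegressionLaw_absolutelyContinuous ν hm₁ hm₂ hv
  have hint := integrable_llr_gaussianRegressionLaw hm₁ hm₂ hL2 hv
  have := isProbabilityMeasure_gaussianRegressionLaw (ν := ν) (v := v) hm₁
  have := isProbabilityMeasure_gaussianRegressionLaw (ν := ν) (v := v) hm₂
  have (μ : Measure (X × ℝ)) [IsProbabilityMeasure μ] :
      IsProbabilityMeasure (μ.map (Prod.map id (· • f))) :=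
    Measure.isProbabilityMeasure_map embedding.measurable.aemeasurable
  rw [klDivergence_pi (fun _ ↦ hac.map embedding.measurable)
      fun _ ↦ InformationTheory.integrable_llr_map hac embedding.measurable hint,
    Finset.sum_const, klDivergence_map_of_measurableEmbedding embedding hac,
    klDivergence_gaussianRegressionLaw hm₁ hm₂ hL2 hv, Finset.card_univ, nsmul_eq_mul]
  ring

lemma map_prodMk_smul_add_smul {Ω : Type*} [MeasurableSpace Ω] {μ : Measure Ω} {x : Ω → X}
    {ε : Ω → ℝ} {v : ℝ≥0} (hx : AEMeasurable x μ) (hε : HasLaw ε (gaussianReal 0 v) μ)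
    (hindep : IndepFun x ε μ) {m : X → ℝ} (hm : Measurable m) (f : E) :
    μ.map (fun ω ↦ (x ω, m (x ω) • f + ε ω • f)) =
      (gaussianRegressionLaw (μ.map x) m v).map (Prod.map id (· • f)) := by
  have : IsProbabilityMeasure μ := hε.isProbabilityMeasure
  rw [gaussianRegressionLaw, ← hε.map_eq,
    ← (indepFun_iff_map_prod_eq_prod_map_map hx hε.aemeasurable).1 hindep,
    Measure.map_map (by fun_prop) (by fun_prop),
    AEMeasurable.map_map_of_aemeasurable (by fun_prop) (hx.prodMk hε.aemeasurable)]
  simp only [Function.comp_def, Prod.map_apply, id_eq, add_smul]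

end LinearOutput

lemma norm_sq_eq_integral_inner_sq_of_comp_self_eq_covariance {H Ω : Type*} [NormedAddCommGroup H]
    [InnerProductSpace ℝ H] [MeasurableSpace Ω] {μ : Measure Ω} {x : Ω → H} {C R : H →ₗ[ℝ] H}
    (hC : ∀ f g, ⟪C f, g⟫ = ∫ ω, ⟪x ω, f⟫ * ⟪x ω, g⟫ ∂μ) (hR : R.IsSymmetric)
    (hRsq : R ∘ₗ R = C) (f : H) : ‖R f‖ ^ 2 = ∫ ω, ⟪x ω, f⟫ ^ 2 ∂μ := by
  rw [← real_inner_self_eq_norm_sq, ← hR, ← LinearMap.comp_apply, hRsq, hC]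
  simp only [sq]

theorem stmt_17_general {H E ι : Type} [NormedAddCommGroup H] [InnerProductSpace ℝ H]
    [MeasurableSpace H] [OpensMeasurableSpace H] [NormedAddCommGroup E] [NormedSpace ℝ E]
    [MeasurableSpace E] [BorelSpace E] [Fintype ι] {Ω : Type*} [MeasurableSpace Ω] {μ : Measure Ω}
    {x : Ω → H} (hx : AEMeasurable x μ) (hx2 : ∀ f, MemLp (fun ω ↦ ⟪x ω, f⟫) 2 μ)
    {ε : Ω → ℝ} {v : ℝ≥0} (hv : v ≠ 0) (hε : HasLaw ε (gaussianReal 0 v) μ)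
    (hindep : IndepFun x ε μ) {f₁ : E} (hf₁ : f₁ ≠ 0) {C R : H →ₗ[ℝ] H}
    (hC : ∀ f g, ⟪C f, g⟫ = ∫ ω, ⟪x ω, f⟫ * ⟪x ω, g⟫ ∂μ) (hR : R.IsSymmetric)
    (hRsq : R ∘ₗ R = C) (β β' : H) :
    klDivergence
        (Measure.pi fun _ : ι ↦ μ.map fun ω ↦ (x ω, ⟪β, x ω⟫ • f₁ + ε ω • f₁))
        (Measure.pi fun _ : ι ↦ μ.map fun ω ↦ (x ω, ⟪β', x ω⟫ • f₁ + ε ω • f₁)) =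
      Fintype.card ι / (2 * v) * ‖R (β - β')‖ ^ 2 := by
  have : IsProbabilityMeasure μ := hε.isProbabilityMeasure
  have : IsProbabilityMeasure (μ.map x) := Measure.isProbabilityMeasure_map hx
  have hm (b : H) : Measurable fun h ↦ ⟪b, h⟫ := by fun_prop
  have hL2 : MemLp (fun h ↦ ⟪β, h⟫ - ⟪β', h⟫) 2 (μ.map x) := by
    rw [memLp_map_measure_iff (Measurable.aestronglyMeasurable (by fun_prop)) hx]
    simpa only [Function.comp_def, inner_sub_right, real_inner_comm] using hx2 (β - β')
  have mean_sq : ∫ h, (⟪β, h⟫ - ⟪β', h⟫) ^ 2 ∂μ.map x = ‖R (β - β')‖ ^ 2 := by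
    rw [norm_sq_eq_integral_inner_sq_of_comp_self_eq_covariance hC hR hRsq,
      integral_map hx (Measurable.aestronglyMeasurable (by fun_prop))]
    simp only [inner_sub_right, real_inner_comm]
  simp only [map_prodMk_smul_add_smul hx hε hindep (hm _)]
  rw [klDivergence_pi_map_gaussianRegressionLaw (hm β) (hm β') hL2 hv hf₁, mean_sq]

/-- for the scalar-output Gaussian model `y = ⟪β, x⟫ f₁ + ε` with
`ε = ε₁ f₁`, `ε₁ ~ N(0, σ²)` independent of `x`, the KL divergence between the `T`-fold
products of the laws `ρ_{β_i}`, `ρ_{β_j}` of `(x, y)` equals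
`(T/(2σ²)) ‖L_C^{1/2}(β_i - β_j)‖²`, where `L_C = E[x ⊗ x]` and `R = L_C^{1/2}` is its
positive square root. -/
theorem stmt_17 {H₁ H₂ : Type} [NormedAddCommGroup H₁] [InnerProductSpace ℝ H₁]
    [CompleteSpace H₁] [SecondCountableTopology H₁] [MeasurableSpace H₁] [BorelSpace H₁]
    [NormedAddCommGroup H₂] [InnerProductSpace ℝ H₂] [CompleteSpace H₂]
    [SecondCountableTopology H₂] [MeasurableSpace H₂] [BorelSpace H₂]
    {Ω : Type} [MeasurableSpace Ω] (μ : Measure Ω) [IsProbabilityMeasure μ]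
    (x : Ω → H₁) (hx : Measurable x) (hx2 : Integrable (fun ω => ‖x ω‖ ^ 2) μ)
    (ε₁ : Ω → ℝ) (hε₁ : Measurable ε₁)
    (σ : ℝ≥0) (hσ : σ ≠ 0)
    (hlaw : Measure.map ε₁ μ = gaussianReal 0 (σ ^ 2))
    (hindep : IndepFun x ε₁ μ)
    (f₁ : H₂) (hf₁ : ‖f₁‖ = 1)
    (LC R : H₁ →L[ℝ] H₁)
    (hLC : ∀ f g : H₁, ⟪LC f, g⟫ = ∫ ω, ⟪x ω, f⟫ * ⟪x ω, g⟫ ∂μ)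
    (hRpos : R.IsPositive) (hRsq : R ∘L R = LC)
    (T : ℕ) (βi βj : H₁)
    (ρi ρj : Measure (H₁ × H₂)) [IsProbabilityMeasure ρi] [IsProbabilityMeasure ρj]
    (hρi : ρi = Measure.map (fun ω => (x ω, ⟪βi, x ω⟫ • f₁ + ε₁ ω • f₁)) μ)
    (hρj : ρj = Measure.map (fun ω => (x ω, ⟪βj, x ω⟫ • f₁ + ε₁ ω • f₁)) μ) :
    klDivergence (Measure.pi fun _ : Fin T => ρi) (Measure.pi fun _ : Fin T => ρj)
      = (T : ℝ) / (2 * (σ : ℝ) ^ 2) * ‖R (βi - βj)‖ ^ 2 := by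
  subst hρi hρj
  simpa using stmt_17_general (ι := Fin T) hx.aemeasurable
    (fun f ↦ ((memLp_two_iff_integrable_sq_norm hx.aestronglyMeasurable).2 hx2).inner_const f)
    (pow_ne_zero 2 hσ) ⟨hε₁.aemeasurable, hlaw⟩ hindep (norm_ne_zero_iff.1 (by simp [hf₁])) hLC
    hRpos.isSymmetric (congrArg ContinuousLinearMap.toLinearMap hRsq) βi βj
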